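/- For every nonnegative integer n, ped(225n + 88) ≡ 0 (mod 24). -/

import Mathlib

/-- `ped n` is the number of partitions of `n` in which the even parts are
distinct (and the odd parts are unrestricted). -/
def ped (n : ℕ) : ℕ :=
  Fintype.card {p : n.Partition // ∀ x ∈ p.parts, Even x → p.parts.count x ≤ 1}

/-!
Replacing `q` by `-q` in the generating function `∏ (1 + q ^ (2i)) / (1 - q ^ (2i - 1))` of `ped`
and inserting Gauss' product for `ψ(q) = ∑ q ^ (n(n+1)/2)` gives `ψ(q²) / ψ(q) = ψ(q) / φ(q)`,
where `φ(q) = ∑ q ^ (n²)`. Write `A = f(q, q²)` and `Ω = f(q, q⁵)` in Ramanujan's notation. From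
the 3-dissections `φ(q) = φ(q⁹) + 2qΩ(q³)` and `ψ(q) = A(q³) + qψ(q⁹)`, together with
`2ψ(q)ψ(q²) = ψ(q³)φ(q³) + A(q)Ω(q)`, one finds the subseries of `ψ / φ` over the exponents
`3n + 1`.

Modulo 3 it is `2ψ(q³)φ(q)`, and no square is congruent to 2 modulo 3; so `3 ∣ ped (9n + 7)`.
Modulo 8, where `φ⁴ = 1`, it is `4ψ(q)ψ(q²)` plus a series in `q³`, and taking the exponents
`3n + 2` leaves `4A(q)ψ(q⁶)`. The exponents `e` of `A(q)ψ(q⁶)` satisfy `24e + 19 = x² + 18y²`. If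
`e = 25n + 9`, then 5 divides the right side, hence `x` and `y` because `-3` is not a square modulo
5, and so 25 divides `600n + 235`, which is absurd.
-/

open PowerSeries
open scoped PowerSeries.WithPiTopology

section Topology

theorem coeff_evalNegHom {R : Type*} [CommRing R] (f : R⟦X⟧) (n : ℕ) :
    coeff n (evalNegHom f) = (-1) ^ n * coeff n f := by
  simp [evalNegHom, coeff_rescale]

variable {R : Type*} [CommRing R] [TopologicalSpace R]

theorem nonarchimedeanRing_of_isLinearTopology [IsTopologicalRing R] [IsLinearTopology R R] :
    NonarchimedeanRing R where
  is_nonarchimedean U hU := by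
    obtain ⟨I, hI, hIU⟩ := (IsLinearTopology.hasBasis_open_ideal (R := R)).mem_iff.mp hU
    exact ⟨⟨I.toAddSubgroup, hI⟩, hIU⟩

theorem hasSum_X_pow_sumElim [IsTopologicalRing R] {ι κ : Type*} {d : ι → ℕ} {e : κ → ℕ}
    {f g : R⟦X⟧} (hf : HasSum (fun i ↦ X ^ d i) f) (hg : HasSum (fun j ↦ X ^ e j) g) :
    HasSum (fun i ↦ X ^ Sum.elim d e i) (f + g) :=
  HasSum.sum (by exact hf) (by exact hg)

theorem hasSum_X_pow_add [IsTopologicalRing R] {ι : Type*} {e : ι → ℕ} {f : R⟦X⟧} (k : ℕ)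
    (hf : HasSum (fun i ↦ X ^ e i) f) : HasSum (fun i ↦ X ^ (k + e i)) (X ^ k * f) := by
  simpa only [pow_add] using hf.mul_left (X ^ k)

theorem hasSum_X_pow_mul_hasSum_X_pow {ι κ : Type*} {d : ι → ℕ} {e : κ → ℕ} {f g : ℤ⟦X⟧}
    (hf : HasSum (fun i ↦ X ^ d i) f) (hg : HasSum (fun j ↦ X ^ e j) g) :
    HasSum (fun p : ι × κ ↦ X ^ (d p.1 + e p.2)) (f * g) := by
  have : NonarchimedeanRing ℤ⟦X⟧ := nonarchimedeanRing_of_isLinearTopology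
  simpa only [pow_add] using HasSum.mul_of_nonarchimedean hf hg

theorem summable_X_pow {ι : Type*} {e : ι → ℕ} (h : ∀ n, {i | e i = n}.Finite) :
    Summable fun i ↦ (X : R⟦X⟧) ^ e i := by
  rw [WithPiTopology.summable_iff_summable_coeff]
  refine fun n ↦ summable_of_hasFiniteSupport ((h n).subset fun i hi ↦ ?_)
  rw [Function.mem_support, coeff_X_pow] at hi
  grind

theorem coeff_eq_zero_of_hasSum_X_pow [T2Space R] {ι : Type*} {e : ι → ℕ} {f : R⟦X⟧}
    (h : HasSum (fun i ↦ X ^ e i) f) {n : ℕ} (hn : ∀ i, e i ≠ n) : coeff n f = 0 := by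
  refine ((WithPiTopology.hasSum_iff_hasSum_coeff R).mp h n).unique ?_
  simp [coeff_X_pow, fun i ↦ (hn i).symm]

theorem eq_of_hasSum_X_pow [T2Space R] {ι κ : Type*} {d : ι → ℕ} {e : κ → ℕ} {f g : R⟦X⟧}
    (hf : HasSum (fun i ↦ X ^ d i) f) (hg : HasSum (fun j ↦ X ^ e j) g) {σ : κ → ι}
    (hσ : σ.Bijective) (h : ∀ j, d (σ j) = e j) : f = g := by
  refine ((Equiv.ofBijective σ hσ).hasSum_iff.mpr hf).unique ?_
  simpa [Function.comp_def, h] using hg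

theorem continuous_expand (k : ℕ) (hk : k ≠ 0) : Continuous (expand k hk : R⟦X⟧ → R⟦X⟧) := by
  refine continuous_iff_continuousAt.mpr fun f ↦
    (WithPiTopology.tendsto_iff_coeff_tendsto ..).mpr fun d ↦ ?_
  simp only [coeff_expand]
  split_ifs
  · exact (WithPiTopology.continuous_coeff R _).continuousAt
  · exact tendsto_const_nhds

theorem continuous_evalNegHom [IsTopologicalRing R] :
    Continuous (evalNegHom : R⟦X⟧ → R⟦X⟧) := by
  refine continuous_iff_continuousAt.mpr fun f ↦
    (WithPiTopology.tendsto_iff_coeff_tendsto ..).mpr fun d ↦ ?_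
  simp only [coeff_evalNegHom]
  exact ((WithPiTopology.continuous_coeff R d).const_mul _).continuousAt

end Topology

section Theta

theorem bijective_sumElim_three_mul :
    (Sum.elim (3 * ·) (Sum.elim (3 * · + 1) (3 * · - 1)) : ℤ ⊕ ℤ ⊕ ℤ → ℤ).Bijective := by
  refine ⟨?_, fun n ↦ ?_⟩
  · rintro (i | i | i) (j | j | j) h <;> simp only [Sum.elim_inl, Sum.elim_inr] at h <;> grind
  · obtain h | h | h : n % 3 = 0 ∨ n % 3 = 1 ∨ n % 3 = 2 := by lia
    · exact ⟨.inl (n / 3), by simp only [Sum.elim_inl]; lia⟩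
    · exact ⟨.inr (.inl (n / 3)), by simp only [Sum.elim_inl, Sum.elim_inr]; lia⟩
    · exact ⟨.inr (.inr (n / 3 + 1)), by simp only [Sum.elim_inr]; lia⟩

/-- The exponent `r * n(n+1)/2 + s * n(n-1)/2` of the `n`-th term of Ramanujan's theta function. -/
def thetaExp (r s : ℕ) (n : ℤ) : ℕ :=
  ((r * (n * (n + 1)) + s * (n * (n - 1))) / 2).toNat

theorem two_mul_natCast_thetaExp (r s : ℕ) (n : ℤ) :
    2 * (thetaExp r s n : ℤ) = r * (n * (n + 1)) + s * (n * (n - 1)) := by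
  have hr : 0 ≤ n * (n + 1) := by rcases lt_or_ge n 0 with h | h <;> nlinarith
  have hs : 0 ≤ n * (n - 1) := by rcases lt_or_ge 0 n with h | h <;> nlinarith
  have heven : 2 ∣ r * (n * (n + 1)) + s * (n * (n - 1)) :=
    dvd_add ((Int.even_mul_succ_self n).two_dvd.mul_left _)
      ((Int.even_mul_pred_self n).two_dvd.mul_left _)
  rw [thetaExp, Int.toNat_of_nonneg (by positivity), Int.mul_ediv_cancel' heven]

theorem finite_setOf_thetaExp_eq {r s : ℕ} (h : 0 < r + s) (m : ℕ) :
    {n | thetaExp r s n = m}.Finite := by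
  refine (Set.finite_Icc (-(2 * m + 1) : ℤ) (2 * m + 1)).subset fun n (hn : _ = m) ↦ abs_le.mp ?_
  have hexp := two_mul_natCast_thetaExp r s n
  rw [hn] at hexp
  have hr : 0 ≤ r * (n * (n + 1) - (|n| - 1)) := mul_nonneg (by positivity) <| by
    nlinarith [sq_nonneg (|n| - 1), sq_abs n, neg_abs_le n]
  have hs : 0 ≤ s * (n * (n - 1) - (|n| - 1)) := mul_nonneg (by positivity) <| by
    nlinarith [sq_nonneg (|n| - 1), sq_abs n, le_abs_self n]
  zify at h
  nlinarith

/-- Ramanujan's theta function `f(q ^ r, q ^ s) = ∑ n : ℤ, q ^ (r * n(n+1)/2 + s * n(n-1)/2)`, as a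
power series in `q`; the sum converges unless `r = s = 0`. -/
noncomputable def theta (r s : ℕ) : ℤ⟦X⟧ :=
  ∑' n, X ^ thetaExp r s n

theorem hasSum_theta (r s : ℕ) (h : 0 < r + s := by lia) :
    HasSum (fun n ↦ X ^ thetaExp r s n) (theta r s) :=
  (summable_X_pow (finite_setOf_thetaExp_eq h)).hasSum

theorem hasSum_theta_mul_theta (r s r' s' : ℕ) (h : 0 < r + s := by lia)
    (h' : 0 < r' + s' := by lia) :
    HasSum (fun p : ℤ × ℤ ↦ X ^ (thetaExp r s p.1 + thetaExp r' s' p.2))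
      (theta r s * theta r' s') :=
  hasSum_X_pow_mul_hasSum_X_pow (hasSum_theta r s h) (hasSum_theta r' s' h')

theorem theta_comm (r s : ℕ) : theta r s = theta s r := by
  refine ((Equiv.neg ℤ).tsum_eq _).symm.trans (tsum_congr fun n ↦ congrArg (X ^ ·) ?_)
  rw [Equiv.neg_apply]
  zify
  linarith [two_mul_natCast_thetaExp r s (-n), two_mul_natCast_thetaExp s r n]

theorem expand_theta {k : ℕ} (hk : k ≠ 0) (r s : ℕ) (h : 0 < r + s := by lia) :
    expand k hk (theta r s) = theta (k * r) (k * s) := by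
  refine ((hasSum_theta r s h).map (expand k hk) (continuous_expand k hk)).unique ?_
  have hexp (n : ℤ) : k * thetaExp r s n = thetaExp (k * r) (k * s) n := by
    have h₁ := two_mul_natCast_thetaExp r s n
    have h₂ := two_mul_natCast_thetaExp (k * r) (k * s) n
    push_cast at h₂
    zify
    linarith [congrArg ((k : ℤ) * ·) h₁]
  simpa [Function.comp_def, ← pow_mul, hexp] using
    hasSum_theta (k * r) (k * s) (by rw [← mul_add]; positivity)

theorem theta_eq_add_add (r s : ℕ) (h : 0 < r + s := by lia) :
    theta r s = theta (6 * r + 3 * s) (3 * r + 6 * s) +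
      (X ^ r * theta (9 * r + 6 * s) (3 * s) + X ^ s * theta (3 * r) (6 * r + 9 * s)) := by
  have h₀ := hasSum_theta (6 * r + 3 * s) (3 * r + 6 * s)
  have h₁ := hasSum_X_pow_add r (hasSum_theta (9 * r + 6 * s) (3 * s))
  have h₂ := hasSum_X_pow_add s (hasSum_theta (3 * r) (6 * r + 9 * s))
  refine eq_of_hasSum_X_pow (hasSum_theta r s)
    (hasSum_X_pow_sumElim h₀ (hasSum_X_pow_sumElim h₁ h₂)) bijective_sumElim_three_mul ?_
  rintro (n | n | n) <;> simp only [Sum.elim_inl, Sum.elim_inr] <;> zify <;>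
    refine mul_left_cancel₀ two_ne_zero ?_ <;>
    simp only [mul_add, two_mul_natCast_thetaExp] <;> push_cast <;> ring

theorem bijective_sumElim_add_sub : (Sum.elim (fun p ↦ (p.1 + p.2, p.1 - p.2))
    (fun p ↦ (p.1 + p.2 - 1, p.1 - p.2)) : ℤ × ℤ ⊕ ℤ × ℤ → ℤ × ℤ).Bijective := by
  refine ⟨?_, fun ⟨x, y⟩ ↦ ?_⟩
  · rintro (⟨n, j⟩ | ⟨n, j⟩) (⟨n', j'⟩ | ⟨n', j'⟩) h <;>
      simp only [Sum.elim_inl, Sum.elim_inr, Prod.mk.injEq] at h <;> grind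
  · obtain h | h : (x - y) % 2 = 0 ∨ (x - y) % 2 = 1 := by lia
    · exact ⟨.inl ((x + y) / 2, (x - y) / 2), by simp only [Sum.elim_inl, Prod.mk.injEq]; lia⟩
    · exact ⟨.inr ((x + y + 1) / 2, (x - y + 1) / 2), by
        simp only [Sum.elim_inr, Prod.mk.injEq]; lia⟩

theorem theta_add_sq (r s : ℕ) (h : 0 < 2 * r + s := by lia) :
    theta (r + s) r ^ 2 = theta (2 * r + 2 * s) (2 * r) * theta (2 * r + s) (2 * r + s) +
      X ^ r * (theta s (4 * r + s) * theta 0 (4 * r + 2 * s)) := by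
  have heven := hasSum_theta_mul_theta (2 * r + 2 * s) (2 * r) (2 * r + s) (2 * r + s)
  have hodd := hasSum_X_pow_add r (hasSum_theta_mul_theta s (4 * r + s) 0 (4 * r + 2 * s))
  rw [sq]
  refine eq_of_hasSum_X_pow (hasSum_theta_mul_theta (r + s) r (r + s) r)
    (hasSum_X_pow_sumElim heven hodd) bijective_sumElim_add_sub ?_
  rintro (⟨n, j⟩ | ⟨n, j⟩) <;> simp only [Sum.elim_inl, Sum.elim_inr] <;> zify <;>
    refine mul_left_cancel₀ two_ne_zero ?_ <;>
    simp only [mul_add, two_mul_natCast_thetaExp] <;> push_cast <;> ring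

-- With `x = 2b + 1` and `y = 2c + 1`, the pair `(b, c)` stands for `x + y√-2`. Multiply it by
-- `1 + √-2`, giving `(x - 2y) + (x + y)√-2`, and split by `x + y` modulo 3; the sign change
-- `(x, y) ↦ (-x, -y)` exchanges the two nonzero classes.
theorem bijective_sumElim_sqrt_neg_two : (Sum.elim (fun p ↦ (2 * p.2 + p.1, p.2 - p.1 - 1))
    (Sum.elim (fun p ↦ (2 * p.2 + p.1, p.2 - p.1)) (fun p ↦ (-2 * p.2 - p.1 - 1, p.1 - p.2 - 1))) :
      ℤ × ℤ ⊕ ℤ × ℤ ⊕ ℤ × ℤ → ℤ × ℤ).Bijective := by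
  refine ⟨?_, fun ⟨b, c⟩ ↦ ?_⟩
  · rintro (⟨k, l⟩ | ⟨k, l⟩ | ⟨k, l⟩) (⟨k', l'⟩ | ⟨k', l'⟩ | ⟨k', l'⟩) h <;>
      simp only [Sum.elim_inl, Sum.elim_inr, Prod.mk.injEq] at h <;> grind
  · obtain h | h | h : (b + c) % 3 = 2 ∨ (b + c) % 3 = 0 ∨ (b + c) % 3 = 1 := by lia
    · exact ⟨.inl (b - 2 * ((b + c) / 3 + 1), (b + c) / 3 + 1), by
        simp only [Sum.elim_inl, Prod.mk.injEq]; lia⟩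
    · exact ⟨.inr (.inl (b - 2 * ((b + c) / 3), (b + c) / 3)), by
        simp only [Sum.elim_inl, Sum.elim_inr, Prod.mk.injEq]; lia⟩
    · exact ⟨.inr (.inr (2 * ((b + c) / 3) + 1 - b, -((b + c) / 3) - 1)), by
        simp only [Sum.elim_inr, Prod.mk.injEq]; lia⟩

theorem theta_one_zero_mul_theta_two_zero :
    theta 1 0 * theta 2 0 = theta 3 0 * theta 3 3 + 2 * (theta 1 2 * theta 5 1) := by
  have h₀ := hasSum_theta_mul_theta 3 0 3 3
  have h₁ := hasSum_theta_mul_theta 1 2 5 1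
  rw [two_mul]
  refine eq_of_hasSum_X_pow (hasSum_theta_mul_theta 1 0 2 0)
    (hasSum_X_pow_sumElim h₀ (hasSum_X_pow_sumElim h₁ h₁)) bijective_sumElim_sqrt_neg_two ?_
  rintro (⟨k, l⟩ | ⟨k, l⟩ | ⟨k, l⟩) <;> simp only [Sum.elim_inl, Sum.elim_inr] <;> zify <;>
    refine mul_left_cancel₀ two_ne_zero ?_ <;>
    simp only [mul_add, two_mul_natCast_thetaExp] <;> push_cast <;> ring

end Theta

section Gauss

variable {R : Type*} [CommRing R] (q : R)

/-- The mixed partial product `(1-q)(1-q^3)⋯(1-q^(2s-1)) · (1-q^(2s+2))(1-q^(2s+4))⋯(1-q^(2n))`,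
interpolating between the even (`s = 0`) and the odd (`s = n`) product of `n` factors. -/
def oddEvenProd (n s : ℕ) : R :=
  (∏ i ∈ Finset.range s, (1 - q ^ (2 * i + 1))) * ∏ i ∈ Finset.Ico s n, (1 - q ^ (2 * i + 2))

theorem oddEvenProd_succ_left {n s : ℕ} (h : s ≤ n) :
    oddEvenProd q (n + 1) s = (1 - q ^ (2 * n + 2)) * oddEvenProd q n s := by
  rw [oddEvenProd, oddEvenProd, Finset.prod_Ico_succ_top h]
  ring

theorem one_sub_mul_oddEvenProd_succ {n s : ℕ} (h : s < n) :
    (1 - q ^ (2 * s + 2)) * oddEvenProd q n (s + 1) =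
      (1 - q ^ (2 * s + 1)) * oddEvenProd q n s := by
  rw [oddEvenProd, oddEvenProd, Finset.prod_range_succ, Finset.prod_eq_prod_Ico_succ_bot h]
  ring

theorem oddEvenProd_self_succ (n : ℕ) :
    oddEvenProd q (n + 1) (n + 1) = (1 - q ^ (2 * n + 1)) * oddEvenProd q n n := by
  simp only [oddEvenProd, Finset.Ico_self, Finset.prod_range_succ, Finset.prod_empty]
  ring

theorem sum_oddEvenProd_succ_sub (n : ℕ) :
    (∑ s ∈ Finset.range n, oddEvenProd q (n + 1) s * q ^ (s * (2 * n + 3))) -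
        (1 - q ^ (2 * n + 1)) * ∑ s ∈ Finset.range n, oddEvenProd q n s * q ^ (s * (2 * n + 1)) =
      (1 - q ^ (2 * n)) * oddEvenProd q n n * q ^ (n * (2 * n + 1)) := by
  have htele := Finset.sum_range_sub
    (fun s ↦ (1 - q ^ (2 * s)) * oddEvenProd q n s * q ^ (s * (2 * n + 1))) n
  simp only [mul_zero, pow_zero, sub_self, zero_mul, sub_zero] at htele
  rw [← htele, Finset.mul_sum, ← Finset.sum_sub_distrib]
  refine Finset.sum_congr rfl fun s hs ↦ ?_
  have hs := Finset.mem_range.mp hs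
  rw [oddEvenProd_succ_left q hs.le, mul_add_one 2 s, one_sub_mul_oddEvenProd_succ q hs]
  ring

-- Shanks' finite form of Gauss' identity for `∑ q ^ (s(s+1)/2)`.
theorem oddEvenProd_self_mul_sum_range (n : ℕ) :
    oddEvenProd q n n * ∑ s ∈ Finset.range (2 * n), q ^ (s * (s + 1) / 2) =
      ∑ s ∈ Finset.range n, oddEvenProd q n s * q ^ (s * (2 * n + 1)) := by
  induction n with
  | zero => simp
  | succ n ih =>
    have h₀ : 2 * n * (2 * n + 1) / 2 = n * (2 * n + 1) := by grind
    have h₁ : (2 * n + 1) * (2 * n + 1 + 1) / 2 = n * (2 * n + 1) + (2 * n + 1) := by grind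
    rw [oddEvenProd_self_succ, mul_add_one 2 n, Finset.sum_range_succ, Finset.sum_range_succ,
      h₀, h₁, Finset.sum_range_succ, oddEvenProd_succ_left q le_rfl]
    linear_combination (1 - q ^ (2 * n + 1)) * ih - sum_oddEvenProd_succ_sub q n

theorem X_pow_dvd_sum_oddEvenProd_sub (n : ℕ) :
    (X : R⟦X⟧) ^ n ∣ (∑ s ∈ Finset.range n, oddEvenProd X n s * X ^ (s * (2 * n + 1))) -
      oddEvenProd X n 0 := by
  rcases n with _ | n
  · simp
  rw [Finset.sum_range_succ', zero_mul, pow_zero, mul_one, add_sub_cancel_right]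
  exact Finset.dvd_sum fun s _ ↦ (pow_dvd_pow X (by nlinarith)).mul_left _

end Gauss

section Products

variable {R : Type*} [CommRing R] [TopologicalSpace R]

theorem tendsto_nhds_zero_of_X_pow_dvd {f : ℕ → R⟦X⟧} (h : ∀ n, X ^ n ∣ f n) :
    Filter.Tendsto f Filter.atTop (nhds 0) := by
  refine (WithPiTopology.tendsto_iff_coeff_tendsto ..).mpr fun d ↦ ?_
  refine tendsto_const_nhds.congr' ((Filter.eventually_gt_atTop d).mono fun n hn ↦ ?_)
  exact (X_pow_dvd_iff.mp (h n) d hn).symm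

theorem multipliable_one_add_of_X_pow_dvd {f : ℕ → R⟦X⟧} (h : ∀ n, X ^ n ∣ f n) :
    Multipliable fun n ↦ 1 + f n := by
  refine WithPiTopology.multipliable_one_add_of_tendsto_order_atTop_nhds_top R ?_
  refine tendsto_nhds_top_mono ENat.tendsto_natCast_nhds_top (.of_forall fun n ↦ ?_)
  exact le_order _ _ fun i hi ↦ X_pow_dvd_iff.mp (h n) i (by exact_mod_cast hi)

theorem constantCoeff_eq_one_of_hasProd [T2Space R] {ι : Type*} {f : ι → R⟦X⟧} {F : R⟦X⟧}
    (h : HasProd f F) (hf : ∀ i, constantCoeff (f i) = 1) : constantCoeff F = 1 := by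
  refine (h.map constantCoeff (WithPiTopology.continuous_constantCoeff R)).unique ?_
  simp [Function.comp_def, hf]

theorem hasProd_one_add_X_pow {e : ℕ → ℕ} (h : ∀ i, i ≤ e i) :
    HasProd (fun i ↦ 1 + X ^ e i) (∏' i, (1 + X ^ e i) : R⟦X⟧) :=
  (multipliable_one_add_of_X_pow_dvd fun i ↦ pow_dvd_pow X (h i)).hasProd

theorem hasProd_one_sub_X_pow {e : ℕ → ℕ} (h : ∀ i, i ≤ e i) :
    HasProd (fun i ↦ 1 - X ^ e i) (∏' i, (1 - X ^ e i) : R⟦X⟧) := by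
  simpa only [sub_eq_add_neg] using
    (multipliable_one_add_of_X_pow_dvd fun i ↦ (pow_dvd_pow (X : R⟦X⟧) (h i)).neg_right).hasProd

/-- Ramanujan's `ψ(q) = ∑ n : ℕ, q ^ (n(n+1)/2)`. -/
noncomputable def ramanujanPsi : ℤ⟦X⟧ :=
  ∑' n : ℕ, X ^ (n * (n + 1) / 2)

theorem hasSum_ramanujanPsi : HasSum (fun n : ℕ ↦ X ^ (n * (n + 1) / 2)) ramanujanPsi := by
  refine (summable_X_pow fun m ↦ (Set.finite_Iic (2 * m)).subset fun n (hn : _ = m) ↦ ?_).hasSum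
  rw [Set.mem_Iic]
  have := Nat.div_mul_cancel (Nat.even_mul_succ_self n).two_dvd
  nlinarith

theorem ramanujanPsi_mul_tprod :
    ramanujanPsi * ∏' i : ℕ, (1 - X ^ (2 * i + 1)) = ∏' i : ℕ, (1 - X ^ (2 * i + 2)) := by
  have hodd := (hasProd_one_sub_X_pow (R := ℤ) fun i ↦ (by lia : i ≤ 2 * i + 1)).tendsto_prod_nat
  have heven := (hasProd_one_sub_X_pow (R := ℤ) fun i ↦ (by lia : i ≤ 2 * i + 2)).tendsto_prod_nat
  have hpsi := hasSum_ramanujanPsi.tendsto_sum_nat.comp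
    (Filter.tendsto_id.const_mul_atTop' (two_pos : 0 < 2))
  have hdiff := tendsto_nhds_zero_of_X_pow_dvd (X_pow_dvd_sum_oddEvenProd_sub (R := ℤ))
  rw [mul_comm]
  have hlim := hdiff.add heven
  rw [zero_add] at hlim
  refine tendsto_nhds_unique (hodd.mul hpsi) (hlim.congr fun n ↦ ?_)
  have hfinite := oddEvenProd_self_mul_sum_range (X : ℤ⟦X⟧) n
  simp only [oddEvenProd, Finset.Ico_self, Finset.prod_empty, mul_one] at hfinite
  simp [← hfinite, oddEvenProd]

end Products

section Ped

/-- The generating function of `ped`. -/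
noncomputable def pedSeries : ℤ⟦X⟧ := mk fun n ↦ (ped n : ℤ)

theorem pedSeries_eq_genFun : pedSeries =
    Nat.Partition.genFun fun i c ↦ if Even i → c ≤ 1 then (1 : ℤ) else 0 := by
  ext n
  rw [pedSeries, coeff_mk, Nat.Partition.coeff_genFun, ped, Fintype.card_subtype,
    Finset.card_filter]
  simp_rw [Finsupp.prod, Finset.prod_boole]
  simp

theorem one_add_tsum_X_pow_mul_one_sub (n : ℕ) :
    (1 + ∑' j, (X : ℤ⟦X⟧) ^ ((n + 1) * (j + 1))) * (1 - X ^ (n + 1)) = 1 := by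
  have hX : constantCoeff ((X : ℤ⟦X⟧) ^ (n + 1)) = 0 := by simp
  have hgeom := WithPiTopology.one_sub_mul_tsum_pow_of_constantCoeff_eq_zero hX
  rw [(WithPiTopology.summable_pow_of_constantCoeff_eq_zero hX).tsum_eq_zero_add, pow_zero] at hgeom
  simpa only [pow_mul, mul_comm] using hgeom

theorem pedSeries_mul_tprod :
    pedSeries * ∏' i : ℕ, (1 - X ^ (2 * i + 1)) = ∏' i : ℕ, (1 + X ^ (2 * i + 2)) := by
  have hodd : HasProd (fun i ↦ if Even (i + 1) then 1 else 1 - X ^ (i + 1))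
      ((∏' i : ℕ, (1 - X ^ (2 * i + 1))) * 1 : ℤ⟦X⟧) := by
    refine HasProd.even_mul_odd ?_ ?_
    · simpa [parity_simps] using hasProd_one_sub_X_pow fun i ↦ (by lia : i ≤ 2 * i + 1)
    · simp [parity_simps]
  have heven : HasProd (fun i ↦ if Even (i + 1) then 1 + X ^ (i + 1) else 1)
      (1 * ∏' i : ℕ, (1 + X ^ (2 * i + 2)) : ℤ⟦X⟧) := by
    refine HasProd.even_mul_odd ?_ ?_
    · simp [parity_simps]
    · simpa [parity_simps] using hasProd_one_add_X_pow fun i ↦ (by lia : i ≤ 2 * i + 2)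
  rw [mul_one] at hodd
  rw [one_mul] at heven
  have hped := Nat.Partition.hasProd_genFun fun i c ↦ if Even i → c ≤ 1 then (1 : ℤ) else 0
  rw [← pedSeries_eq_genFun] at hped
  refine (hped.mul hodd).unique (heven.congr_fun fun n ↦ ?_)
  by_cases hn : Even (n + 1)
  · rw [tsum_eq_single 0 fun j hj ↦ by simp [hn, hj, smul_eq_C_mul]]
    simp [hn, smul_eq_C_mul]
  · simpa [hn, smul_eq_C_mul] using one_add_tsum_X_pow_mul_one_sub n

theorem evalNegHom_pedSeries_mul_tprod :
    evalNegHom pedSeries * ∏' i : ℕ, (1 + X ^ (2 * i + 1)) = ∏' i : ℕ, (1 + X ^ (2 * i + 2)) := by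
  have hodd := hasProd_one_sub_X_pow (R := ℤ) fun i ↦ (by lia : i ≤ 2 * i + 1)
  have heven := hasProd_one_add_X_pow (R := ℤ) fun i ↦ (by lia : i ≤ 2 * i + 2)
  have hodd_neg := hodd.map evalNegHom continuous_evalNegHom
  have heven_neg := heven.map evalNegHom continuous_evalNegHom
  simp only [Function.comp_def, map_sub, map_one, map_pow, evalNegHom_X,
    (odd_two_mul_add_one _).neg_pow, sub_neg_eq_add] at hodd_neg
  simp only [Function.comp_def, map_add, map_one, map_pow, evalNegHom_X,
    ← mul_add_one 2, (even_two_mul _).neg_pow] at heven_neg heven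
  rw [hodd_neg.tprod_eq, ← map_mul, pedSeries_mul_tprod]
  exact heven_neg.unique heven

theorem tprod_one_sub_mul_tprod_one_add {e : ℕ → ℕ} (h : ∀ i, i ≤ e i) :
    (∏' i, (1 - X ^ e i)) * ∏' i, (1 + X ^ e i) =
      expand 2 two_ne_zero (∏' i, (1 - X ^ e i) : ℤ⟦X⟧) := by
  have hsub := hasProd_one_sub_X_pow (R := ℤ) h
  refine (hsub.mul (hasProd_one_add_X_pow h)).unique
    ((hsub.map (expand 2 two_ne_zero) (continuous_expand ..)).congr_fun fun i ↦ ?_)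
  simp only [Function.comp_apply, map_sub, map_one, map_pow, expand_X]
  ring

theorem evalNegHom_pedSeries_mul_ramanujanPsi :
    evalNegHom pedSeries * ramanujanPsi = expand 2 two_ne_zero ramanujanPsi := by
  have hodd : ∀ i, i ≤ 2 * i + 1 := by lia
  have heven : ∀ i, i ≤ 2 * i + 2 := by lia
  have hgauss := congrArg (expand 2 two_ne_zero) ramanujanPsi_mul_tprod
  rw [map_mul, ← tprod_one_sub_mul_tprod_one_add hodd, ← tprod_one_sub_mul_tprod_one_add heven,
    ← ramanujanPsi_mul_tprod, ← evalNegHom_pedSeries_mul_tprod] at hgauss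
  have hsub := constantCoeff_eq_one_of_hasProd (hasProd_one_sub_X_pow (R := ℤ) hodd) (by simp)
  have hadd := constantCoeff_eq_one_of_hasProd (hasProd_one_add_X_pow (R := ℤ) hodd) (by simp)
  have hne : (∏' i : ℕ, (1 - X ^ (2 * i + 1)) : ℤ⟦X⟧) * ∏' i : ℕ, (1 + X ^ (2 * i + 1)) ≠ 0 := by
    intro h
    simpa [hsub, hadd] using congrArg constantCoeff h
  refine mul_right_cancel₀ hne (.trans ?_ hgauss.symm)
  ring

end Ped

section PhiPsi

instance powerSeries_charZero {R : Type*} [CommSemiring R] [CharZero R] : CharZero R⟦X⟧ :=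
  charZero_of_injective_ringHom C_injective

theorem theta_one_zero : theta 1 0 = 2 * ramanujanPsi := by
  have hnonneg (n : ℕ) : thetaExp 1 0 n = n * (n + 1) / 2 := by
    have := two_mul_natCast_thetaExp 1 0 n
    have := Nat.div_mul_cancel (Nat.even_mul_succ_self n).two_dvd
    push_cast at *
    lia
  have hneg (n : ℕ) : thetaExp 1 0 (-(n + 1)) = n * (n + 1) / 2 := by
    rw [← hnonneg]
    zify
    refine mul_left_cancel₀ two_ne_zero ?_
    simp only [two_mul_natCast_thetaExp]
    push_cast
    ring
  rw [two_mul]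
  refine (hasSum_theta 1 0).unique (HasSum.of_nat_of_neg_add_one ?_ ?_)
  · simpa only [hnonneg] using hasSum_ramanujanPsi
  · simpa only [hneg] using hasSum_ramanujanPsi

theorem ramanujanPsi_sq : ramanujanPsi ^ 2 = theta 1 1 * expand 2 two_ne_zero ramanujanPsi := by
  have hsq := theta_add_sq 0 1
  have hexpand := expand_theta two_ne_zero 1 0
  norm_num [theta_one_zero, theta_comm 0 2] at hsq hexpand
  rw [map_ofNat] at hexpand
  refine mul_left_cancel₀ (OfNat.ofNat_ne_zero 4 : (4 : ℤ⟦X⟧) ≠ 0) ?_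
  linear_combination hsq - 2 * theta 1 1 * hexpand

theorem constantCoeff_ramanujanPsi : constantCoeff ramanujanPsi = 1 := by
  have hodd := constantCoeff_eq_one_of_hasProd
    (hasProd_one_sub_X_pow (R := ℤ) fun i ↦ (by lia : i ≤ 2 * i + 1)) (by simp)
  have heven := constantCoeff_eq_one_of_hasProd
    (hasProd_one_sub_X_pow (R := ℤ) fun i ↦ (by lia : i ≤ 2 * i + 2)) (by simp)
  simpa [hodd, heven] using congrArg constantCoeff ramanujanPsi_mul_tprod

theorem evalNegHom_pedSeries_mul_theta : evalNegHom pedSeries * theta 1 1 = ramanujanPsi := by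
  have hne : ramanujanPsi ≠ 0 := fun h ↦ by simpa [h] using constantCoeff_ramanujanPsi
  refine mul_right_cancel₀ hne ?_
  linear_combination theta 1 1 * evalNegHom_pedSeries_mul_ramanujanPsi - ramanujanPsi_sq

theorem two_dvd_theta_self_sub_one {r : ℕ} (hr : 0 < r) : 2 ∣ theta r r - 1 := by
  have hpair := (hasSum_theta r r).nat_add_neg
  have hexp (n : ℕ) : thetaExp r r (-n) = thetaExp r r n := by
    zify
    linarith [two_mul_natCast_thetaExp r r n, two_mul_natCast_thetaExp r r (-n)]
  have hzero : thetaExp r r 0 = 0 := by simp [thetaExp]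
  simp only [hexp, ← two_mul, hzero, pow_zero] at hpair
  have hsum : Summable fun n : ℕ ↦ (X : ℤ⟦X⟧) ^ thetaExp r r n :=
    summable_X_pow fun m ↦ (finite_setOf_thetaExp_eq (r := r) (s := r) (by lia) m).preimage
      Nat.cast_injective.injOn
  obtain ⟨S, hS⟩ : 2 ∣ theta r r + 1 := ⟨_, hpair.unique (hsum.hasSum.mul_left 2)⟩
  exact ⟨S - 1, by linear_combination hS⟩

theorem theta_one_one_dissection :
    theta 1 1 = expand 3 three_ne_zero (theta 3 3) +
      X * expand 3 three_ne_zero (2 * theta 5 1) := by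
  have h := theta_eq_add_add 1 1
  rw [map_mul, map_ofNat, expand_theta _ 3 3, expand_theta _ 5 1]
  norm_num [theta_comm 3 15] at h ⊢
  linear_combination h

theorem ramanujanPsi_dissection :
    ramanujanPsi = expand 3 three_ne_zero (theta 1 2) +
      X * expand 3 three_ne_zero (expand 3 three_ne_zero ramanujanPsi) := by
  refine mul_left_cancel₀ (two_ne_zero' ℤ⟦X⟧) ?_
  have h := theta_eq_add_add 1 0
  have h₉ := congrArg (expand 3 three_ne_zero) (expand_theta three_ne_zero 1 0)
  rw [expand_theta _ 3 0] at h₉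
  rw [expand_theta _ 1 2, theta_comm]
  norm_num [theta_one_zero] at h h₉
  simp only [map_ofNat] at h₉
  rw [theta_comm 3 6] at h
  linear_combination h - X * h₉

theorem two_mul_ramanujanPsi_mul_expand :
    2 * (ramanujanPsi * expand 2 two_ne_zero ramanujanPsi) =
      expand 3 three_ne_zero ramanujanPsi * theta 3 3 + theta 1 2 * theta 5 1 := by
  have h := theta_one_zero_mul_theta_two_zero
  have h₂ := expand_theta two_ne_zero 1 0
  have h₃ := expand_theta three_ne_zero 1 0
  refine mul_left_cancel₀ (two_ne_zero' ℤ⟦X⟧) ?_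
  norm_num [theta_one_zero] at h h₂ h₃
  simp only [map_ofNat] at h₂ h₃
  linear_combination h + 2 * ramanujanPsi * h₂ - theta 3 3 * h₃

end PhiPsi

section Multisection

variable {R : Type*} [CommRing R]

/-- The multisection `∑ n, a (m * n + r) X ^ n` of a power series `∑ n, a n X ^ n`. -/
noncomputable def multisect (m r : ℕ) : R⟦X⟧ →+ R⟦X⟧ where
  toFun f := mk fun n ↦ coeff (m * n + r) f
  map_zero' := by ext; simp
  map_add' f g := by ext; simp

@[simp]
theorem coeff_multisect (m r n : ℕ) (f : R⟦X⟧) :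
    coeff n (multisect m r f) = coeff (m * n + r) f := by
  simp [multisect]

theorem map_multisect {S : Type*} [CommRing S] (φ : R →+* S) (m r : ℕ) (f : R⟦X⟧) :
    map φ (multisect m r f) = multisect m r (map φ f) := by
  ext; simp

theorem multisect_expand_mul {m r : ℕ} (hr : r < m) (f g : R⟦X⟧) :
    multisect m r (expand m hr.ne_bot g * f) = g * multisect m r f := by
  ext n
  rw [coeff_multisect, coeff_mul, coeff_mul]
  refine (Finset.sum_of_injOn (fun p ↦ (m * p.1, m * p.2 + r)) ?_ ?_ ?_ ?_).symm
  · rintro ⟨i, j⟩ - ⟨i', j'⟩ - h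
    have hm : m ≠ 0 := hr.ne_bot
    simpa [hm] using h
  · rintro ⟨i, j⟩ h
    rw [Finset.mem_coe, Finset.HasAntidiagonal.mem_antidiagonal] at h ⊢
    rw [← h]
    ring
  · rintro ⟨i, j⟩ h hij
    rw [coeff_expand_of_not_dvd, zero_mul]
    rintro ⟨k, rfl⟩
    rw [Finset.HasAntidiagonal.mem_antidiagonal] at h
    dsimp only at h
    have hk : k ≤ n := by
      by_contra! hk
      nlinarith
    obtain ⟨l, rfl⟩ := Nat.exists_eq_add_of_le hk
    exact hij ⟨(k, l), by simp, by simp only [Prod.mk.injEq, true_and]; linarith⟩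
  · rintro ⟨i, j⟩ -
    rw [coeff_expand_mul, coeff_multisect]

theorem multisect_X_pow {m i : ℕ} (r : ℕ) (hi : i < m) :
    multisect m r (X ^ i : R⟦X⟧) = if i = r then 1 else 0 := by
  ext n
  rw [coeff_multisect, coeff_X_pow]
  rcases n with _ | n
  · split_ifs <;> simp_all
  · have : m * (n + 1) + r ≠ i := by nlinarith
    simp only [this, if_false]
    split_ifs <;> simp

theorem multisect_expand {m r : ℕ} (hr : r < m) (hr₀ : r ≠ 0) (f : R⟦X⟧) :
    multisect m r (expand m hr.ne_bot f) = 0 := by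
  have h := multisect_expand_mul hr (X ^ 0) f
  rwa [multisect_X_pow r (hr.trans_le' r.zero_le), if_neg hr₀.symm, pow_zero, mul_one,
    mul_zero] at h

theorem multisect_sum_X_pow_mul_expand {m : ℕ} (r : Fin m) (a : Fin m → R⟦X⟧) :
    multisect m r (∑ i : Fin m, X ^ (i : ℕ) * expand m r.pos.ne' (a i)) = a r := by
  simp_rw [map_sum, mul_comm (X ^ _), multisect_expand_mul r.isLt,
    multisect_X_pow _ (Fin.isLt _), Fin.val_inj]
  simp

theorem multisect_three (r : Fin 3) (a b c : R⟦X⟧) :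
    multisect 3 r (expand 3 three_ne_zero a + X * expand 3 three_ne_zero b +
      X ^ 2 * expand 3 three_ne_zero c) = ![a, b, c] r := by
  simpa [Fin.sum_univ_three] using multisect_sum_X_pow_mul_expand r ![a, b, c]

theorem multisect_three_one_mul_sq (a b c d : R⟦X⟧) :
    multisect 3 1 ((expand 3 three_ne_zero a + X * expand 3 three_ne_zero b) *
      (expand 3 three_ne_zero c + X * expand 3 three_ne_zero d) ^ 2) =
      2 * a * c * d + b * c ^ 2 := by
  have h := multisect_three 1 (a * c ^ 2 + X * b * d ^ 2) (2 * a * c * d + b * c ^ 2)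
    (a * d ^ 2 + 2 * b * c * d)
  refine .trans (congrArg (multisect 3 1) ?_) h
  simp only [map_add, map_mul, map_pow, map_ofNat, expand_X]
  ring

theorem multisect_three_one_mul_cube (a b c d : R⟦X⟧) :
    multisect 3 1 ((expand 3 three_ne_zero a + X * expand 3 three_ne_zero b) *
      (expand 3 three_ne_zero c + X * expand 3 three_ne_zero d) ^ 3) =
      3 * a * c ^ 2 * d + b * c ^ 3 + X * b * d ^ 3 := by
  have h := multisect_three 1 (a * c ^ 3 + X * a * d ^ 3 + 3 * X * b * c * d ^ 2)
    (3 * a * c ^ 2 * d + b * c ^ 3 + X * b * d ^ 3) (3 * a * c * d ^ 2 + 3 * b * c ^ 2 * d)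
  refine .trans (congrArg (multisect 3 1) ?_) h
  simp only [map_add, map_mul, map_pow, map_ofNat, expand_X]
  ring

theorem multisect_three_two_mul (a b c d : R⟦X⟧) :
    multisect 3 2 ((expand 3 three_ne_zero a + X * expand 3 three_ne_zero b) *
      (expand 3 three_ne_zero c + X ^ 2 * expand 3 three_ne_zero d)) = a * d := by
  have h := multisect_three 2 (a * c + X * b * d) (b * c) (a * d)
  refine .trans (congrArg (multisect 3 2) ?_) h
  simp only [map_add, map_mul, expand_X]
  ring

end Multisection

section Dissection

theorem multisect_ramanujanPsi_mul_theta_sq :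
    multisect 3 1 (ramanujanPsi * theta 1 1 ^ 2) =
      8 * theta 3 3 * (ramanujanPsi * expand 2 two_ne_zero ramanujanPsi) -
        3 * expand 3 three_ne_zero ramanujanPsi * theta 3 3 ^ 2 := by
  have h := multisect_three_one_mul_sq (theta 1 2) (expand 3 three_ne_zero ramanujanPsi)
    (theta 3 3) (2 * theta 5 1)
  rw [← ramanujanPsi_dissection, ← theta_one_one_dissection] at h
  linear_combination h - 4 * theta 3 3 * two_mul_ramanujanPsi_mul_expand

theorem multisect_ramanujanPsi_mul_theta_cube :
    multisect 3 1 (ramanujanPsi * theta 1 1 ^ 3) =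
      12 * theta 3 3 ^ 2 * (ramanujanPsi * expand 2 two_ne_zero ramanujanPsi) -
        5 * expand 3 three_ne_zero ramanujanPsi * theta 3 3 ^ 3 +
          8 * X * expand 3 three_ne_zero ramanujanPsi * theta 5 1 ^ 3 := by
  have h := multisect_three_one_mul_cube (theta 1 2) (expand 3 three_ne_zero ramanujanPsi)
    (theta 3 3) (2 * theta 5 1)
  rw [← ramanujanPsi_dissection, ← theta_one_one_dissection] at h
  linear_combination h - 6 * theta 3 3 ^ 2 * two_mul_ramanujanPsi_mul_expand

theorem multisect_ramanujanPsi_mul_expand :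
    multisect 3 2 (ramanujanPsi * expand 2 two_ne_zero ramanujanPsi) =
      theta 1 2 * expand 2 two_ne_zero (expand 3 three_ne_zero ramanujanPsi) := by
  have h := multisect_three_two_mul (theta 1 2) (expand 3 three_ne_zero ramanujanPsi)
    (expand 2 two_ne_zero (theta 1 2))
    (expand 2 two_ne_zero (expand 3 three_ne_zero ramanujanPsi))
  rw [← ramanujanPsi_dissection] at h
  rw [← h]
  conv_lhs => enter [2, 2]; rw [ramanujanPsi_dissection]
  simp only [map_add, map_mul, expand_X, ← expand_mul]

theorem multisect_theta_one_one : multisect 3 2 (theta 1 1) = 0 := by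
  have h := multisect_three 2 (theta 3 3) (2 * theta 5 1) 0
  rwa [← theta_one_one_dissection, map_zero, mul_zero, add_zero] at h

end Dissection

section Mod

theorem expand_eq_pow {p : ℕ} [Fact p.Prime] (f : (ZMod p)⟦X⟧) :
    expand p (NeZero.ne p) f = f ^ p := by
  have h := MvPowerSeries.map_frobenius_expand p (NeZero.ne p) (f := f)
  rwa [ZMod.frobenius_zmod, MvPowerSeries.map_id] at h

theorem natCast_self_powerSeries (m : ℕ) : (m : (ZMod m)⟦X⟧) = 0 := by
  rw [← map_natCast C, ZMod.natCast_self, map_zero]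

theorem multisect_one_map_three :
    multisect 3 1 (map (Int.castRingHom (ZMod 3)) (evalNegHom pedSeries)) =
      map (Int.castRingHom (ZMod 3)) (expand 3 three_ne_zero (2 * ramanujanPsi) * theta 1 1) := by
  have hped := congrArg (map (Int.castRingHom (ZMod 3))) evalNegHom_pedSeries_mul_theta
  have hsection := congrArg (map (Int.castRingHom (ZMod 3))) multisect_ramanujanPsi_mul_theta_sq
  have hsq := congrArg (map (Int.castRingHom (ZMod 3))) ramanujanPsi_sq
  have hexpand := congrArg (map (Int.castRingHom (ZMod 3))) (expand_theta three_ne_zero 1 1)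
  have hthree : (3 : (ZMod 3)⟦X⟧) = 0 := natCast_self_powerSeries 3
  simp only [map_mul, map_sub, map_pow, map_ofNat, map_multisect, mul_one, map_expand,
    expand_eq_pow] at *
  set H := map (Int.castRingHom (ZMod 3)) (evalNegHom pedSeries)
  set φ := map (Int.castRingHom (ZMod 3)) (theta 1 1)
  set ψ := map (Int.castRingHom (ZMod 3)) ramanujanPsi
  have hconst : constantCoeff ψ = 1 := by
    rw [← coeff_zero_eq_constantCoeff_apply, coeff_map]
    simp [constantCoeff_ramanujanPsi]
  have hne : φ ≠ 0 := by
    rintro h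
    simpa [h, hconst] using congrArg constantCoeff hsq
  have hcube : φ * multisect 3 1 H = multisect 3 1 (ψ * φ ^ 2) := by
    rw [← multisect_expand_mul (by simp), expand_eq_pow]
    congr 1
    linear_combination φ ^ 2 * hped
  refine mul_left_cancel₀ hne ?_
  rw [hcube, hsection, ← hexpand]
  linear_combination (2 * φ ^ 3 * ψ * expand 2 two_ne_zero ψ - ψ ^ 3 * φ ^ 6) * hthree -
    2 * φ ^ 2 * ψ * hsq

theorem multisect_multisect_map_three :
    multisect 3 2 (multisect 3 1 (map (Int.castRingHom (ZMod 3)) (evalNegHom pedSeries))) = 0 := by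
  rw [multisect_one_map_three, ← map_multisect, multisect_expand_mul (by simp),
    multisect_theta_one_one, mul_zero, map_zero]

theorem four_mul_map_theta_self_sq {r : ℕ} (hr : 0 < r) :
    4 * map (Int.castRingHom (ZMod 8)) (theta r r) ^ 2 = 4 := by
  obtain ⟨y, hy⟩ := two_dvd_theta_self_sub_one hr
  have height : (8 : (ZMod 8)⟦X⟧) = 0 := natCast_self_powerSeries 8
  rw [eq_add_of_sub_eq hy, map_add, map_mul, map_ofNat, map_one]
  set z := map (Int.castRingHom (ZMod 8)) y
  linear_combination (2 * z + 2 * z ^ 2) * height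

theorem map_theta_self_pow_four {r : ℕ} (hr : 0 < r) :
    map (Int.castRingHom (ZMod 8)) (theta r r) ^ 4 = 1 := by
  obtain ⟨y, hy⟩ := two_dvd_theta_self_sub_one hr
  have height : (8 : (ZMod 8)⟦X⟧) = 0 := natCast_self_powerSeries 8
  rw [eq_add_of_sub_eq hy, map_add, map_mul, map_ofNat, map_one]
  set z := map (Int.castRingHom (ZMod 8)) y
  linear_combination (z + 3 * z ^ 2 + 4 * z ^ 3 + 2 * z ^ 4) * height

theorem multisect_one_map_eight :
    multisect 3 1 (map (Int.castRingHom (ZMod 8)) (evalNegHom pedSeries)) =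
      map (Int.castRingHom (ZMod 8))
        (expand 3 three_ne_zero 4 * (ramanujanPsi * expand 2 two_ne_zero ramanujanPsi) +
          expand 3 three_ne_zero (3 * ramanujanPsi * theta 1 1 ^ 3)) := by
  have hped := congrArg (map (Int.castRingHom (ZMod 8))) evalNegHom_pedSeries_mul_theta
  have hsection := congrArg (map (Int.castRingHom (ZMod 8))) multisect_ramanujanPsi_mul_theta_cube
  have hfour := map_theta_self_pow_four one_pos
  have hsq := four_mul_map_theta_self_sq three_pos
  have height : (8 : (ZMod 8)⟦X⟧) = 0 := natCast_self_powerSeries 8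
  have hexpand := expand_theta three_ne_zero 1 1
  simp only [map_mul, map_add, map_sub, map_pow, map_ofNat, map_multisect, mul_one,
    hexpand] at *
  set H := map (Int.castRingHom (ZMod 8)) (evalNegHom pedSeries)
  set φ := map (Int.castRingHom (ZMod 8)) (theta 1 1)
  set ψ := map (Int.castRingHom (ZMod 8)) ramanujanPsi
  set F := map (Int.castRingHom (ZMod 8)) (theta 3 3)
  set ψ₂ := map (Int.castRingHom (ZMod 8)) (expand 2 two_ne_zero ramanujanPsi)
  set ψ₃ := map (Int.castRingHom (ZMod 8)) (expand 3 three_ne_zero ramanujanPsi)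
  have hH : H = ψ * φ ^ 3 := by linear_combination φ ^ 3 * hped - H * hfour
  rw [hH, hsection]
  linear_combination 3 * ψ * ψ₂ * hsq + (map (Int.castRingHom (ZMod 8)) X * ψ₃ *
    map (Int.castRingHom (ZMod 8)) (theta 5 1) ^ 3 - ψ₃ * F ^ 3 + ψ * ψ₂) * height

theorem multisect_multisect_map_eight :
    multisect 3 2 (multisect 3 1 (map (Int.castRingHom (ZMod 8)) (evalNegHom pedSeries))) =
      map (Int.castRingHom (ZMod 8))
        (4 * (theta 1 2 * expand 2 two_ne_zero (expand 3 three_ne_zero ramanujanPsi))) := by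
  rw [multisect_one_map_eight, ← map_multisect, map_add, multisect_expand_mul (by simp),
    multisect_expand (by simp) two_ne_zero, multisect_ramanujanPsi_mul_expand, add_zero]

end Mod

section Coeff

theorem eq_zero_of_sq_add_three_mul_sq_eq_zero :
    ∀ {x y : ZMod 5}, x ^ 2 + 3 * y ^ 2 = 0 → x = 0 ∧ y = 0 := by
  decide

theorem thetaExp_add_thetaExp_ne (k j : ℤ) (n : ℕ) :
    thetaExp 1 2 k + thetaExp 6 0 j ≠ 25 * n + 9 := by
  intro h
  have hk := two_mul_natCast_thetaExp 1 2 k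
  have hj := two_mul_natCast_thetaExp 6 0 j
  zify at h
  have hform : (6 * k - 1) ^ 2 + 18 * (2 * j + 1) ^ 2 = 5 * (120 * n + 47) := by
    push_cast at hk hj
    linear_combination 24 * h - 12 * hk - 12 * hj
  generalize 6 * k - 1 = x at hform
  generalize 2 * j + 1 = y at hform
  have hmod : (x : ZMod 5) ^ 2 + 3 * (y : ZMod 5) ^ 2 = 0 := by
    have := congrArg (Int.cast (R := ZMod 5)) hform
    push_cast at this
    have hfive : (5 : ZMod 5) = 0 := rfl
    linear_combination this + (120 * n + 47 - 3 * y ^ 2) * hfive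
  obtain ⟨hx, hy⟩ := eq_zero_of_sq_add_three_mul_sq_eq_zero hmod
  obtain ⟨a, rfl⟩ := (ZMod.intCast_zmod_eq_zero_iff_dvd x 5).mp hx
  obtain ⟨b, rfl⟩ := (ZMod.intCast_zmod_eq_zero_iff_dvd y 5).mp hy
  push_cast at hform
  have : 25 * (a ^ 2 + 18 * b ^ 2) = 5 * (120 * n + 47) := by linear_combination hform
  lia

theorem coeff_theta_mul_expand (n : ℕ) :
    coeff (25 * n + 9) (theta 1 2 *
      expand 2 two_ne_zero (expand 3 three_ne_zero ramanujanPsi)) = 0 := by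
  have hzero := coeff_eq_zero_of_hasSum_X_pow (hasSum_theta_mul_theta 1 2 6 0)
    fun p ↦ thetaExp_add_thetaExp_ne p.1 p.2 n
  have hexpand := congrArg (expand 2 two_ne_zero) (expand_theta three_ne_zero 1 0)
  rw [expand_theta _ (3 * 1) (3 * 0), theta_one_zero] at hexpand
  norm_num at hexpand
  simp only [map_ofNat] at hexpand
  rw [← hexpand, mul_left_comm, ← map_ofNat C, coeff_C_mul] at hzero
  simpa using hzero

theorem coeff_multisect_multisect_map_evalNegHom_pedSeries {R : Type*} [CommRing R] (n : ℕ) :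
    coeff n (multisect 3 2 (multisect 3 1 (map (Int.castRingHom R) (evalNegHom pedSeries)))) =
      (-1) ^ (9 * n + 7) * (ped (9 * n + 7) : R) := by
  rw [coeff_multisect, coeff_multisect, coeff_map, coeff_evalNegHom, pedSeries, coeff_mk,
    show 3 * (3 * n + 2) + 1 = 9 * n + 7 by ring]
  simp

theorem three_dvd_ped_nine_mul_add_seven (n : ℕ) : 3 ∣ ped (9 * n + 7) := by
  have h := congrArg (coeff n) multisect_multisect_map_three
  rwa [coeff_multisect_multisect_map_evalNegHom_pedSeries, map_zero,
    (isUnit_one.neg.pow _).mul_right_eq_zero, ZMod.natCast_eq_zero_iff] at h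

theorem eight_dvd_ped_225_mul_add_88 (n : ℕ) : 8 ∣ ped (225 * n + 88) := by
  have h := congrArg (coeff (25 * n + 9)) multisect_multisect_map_eight
  rwa [coeff_multisect_multisect_map_evalNegHom_pedSeries, coeff_map, ← map_ofNat C, coeff_C_mul,
    coeff_theta_mul_expand, mul_zero, map_zero, (isUnit_one.neg.pow _).mul_right_eq_zero,
    ZMod.natCast_eq_zero_iff,
    show 9 * (25 * n + 9) + 7 = 225 * n + 88 by ring] at h

end Coeff

theorem ped_225n_add_88 (n : ℕ) : ped (225 * n + 88) ≡ 0 [MOD 24] := by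
  have hthree : 3 ∣ ped (225 * n + 88) := by
    rw [show 225 * n + 88 = 9 * (25 * n + 9) + 7 by ring]
    exact three_dvd_ped_nine_mul_add_seven (25 * n + 9)
  rw [Nat.modEq_zero_iff_dvd]
  exact Nat.Coprime.mul_dvd_of_dvd_of_dvd (by norm_num) hthree (eight_dvd_ped_225_mul_add_88 n)
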